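/- Fix constants R*, η > 0 and α ∈ (0, 1/4). Let (W, Σ) be admissible with parameter α (Σ = UΛUᵀ, λ the diagonal of Λ), let τ = τ(W, Σ), and set p_n = Pr_{c ~ N(0,Iₙ)}[ (1/n) d_Σ(W, τ c) ≤ 𝐃_rc^λ(UᵀW, R*) + η ]. Then there is a constant c = c(η, R*, α) such that for all sufficiently large n: ln p_n ≥ −n R* ln 2 · (1 + c n^{4α−1}). -/

import Mathlib

open MeasureTheory Matrix Real

/-- Standard Gaussian measure `N(0, I_n)` on `ℝⁿ`. -/
noncomputable def stdGaussian (n : ℕ) : Measure (Fin n → ℝ) :=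
  Measure.pi fun _ => ProbabilityTheory.gaussianReal 0 1

/-- Distortion `d_Σ(w, v) = (w - v)ᵀ Σ (w - v)`. -/
noncomputable def dSig {n : ℕ} (Sig : Matrix (Fin n) (Fin n) ℝ) (w v : Fin n → ℝ) : ℝ :=
  (w - v) ⬝ᵥ Sig.mulVec (w - v)

/-- Random-coding rate `R_rc(λ, T) = (1/(2n)) Σᵢ log₂(1 + λᵢ T)`. -/
noncomputable def Rrc {n : ℕ} (lam : Fin n → ℝ) (T : ℝ) : ℝ :=
  (1 / (2 * (n : ℝ))) * ∑ i, Real.logb 2 (1 + lam i * T)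

/-- `T_rc(λ, R)`: the unique `T > 0` with `R_rc(λ, T) = R`. -/
noncomputable def Trc {n : ℕ} (lam : Fin n → ℝ) (R : ℝ) : ℝ :=
  Classical.epsilon fun T => 0 < T ∧ Rrc lam T = R

/-- General random-coding distortion `D_rc^λ(V, T) = (1/n) Σᵢ Vᵢ² λᵢ/(1 + λᵢ T)`. -/
noncomputable def DrcV {n : ℕ} (lam V : Fin n → ℝ) (T : ℝ) : ℝ :=
  (1 / (n : ℝ)) * ∑ i, (V i) ^ 2 * lam i / (1 + lam i * T)

/-- `𝐃_rc^λ(V, R) = D_rc^λ(V, T_rc(λ, R))`. -/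
noncomputable def DDrcV {n : ℕ} (lam V : Fin n → ℝ) (R : ℝ) : ℝ :=
  DrcV lam V (Trc lam R)

/-- Scaling parameter `τ`, as a function of `λ`, `W̃ = UᵀW` and `T`. -/
noncomputable def tauDef {n : ℕ} (lam Wt : Fin n → ℝ) (T : ℝ) : ℝ :=
  Real.sqrt (T * ∑ j, (Wt j) ^ 2 * (lam j) ^ 2 / (1 + lam j * T) ^ 2) /
    Real.sqrt (∑ j, lam j / (1 + lam j * T))

/-!
Rotating by `Uᵀ` makes `Σ` diagonal and leaves `N(0, Iₙ)` invariant. Write `w = UᵀW`. Change the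
law of the codeword from `N(0, Iₙ)` to the product of the Gaussians
`N(T λᵢ wᵢ / (τ (1 + λᵢ T)), 1 / (1 + λᵢ T))`. The choice of `τ` makes the relative entropy of the
change at most `n R ln 2` and the mean distortion exactly `n D`. The distortion is a sum of
independent terms whose variances add up to `O(n · n^{4α})`, so by Chebyshev's inequality the
event has probability `1 - O(n^{4α-1})` under the new law. The Donsker–Varadhan inequality, applied
to a multiple of the indicator of the event, transfers this to `N(0, Iₙ)` at the cost of the
relative entropy plus `ln 2`, divided by that probability.
-/

section KullbackLeibler

open ProbabilityTheory hiding stdGaussian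
open InformationTheory
open scoped ENNReal

variable {𝓧 𝓨 : Type*} {m𝓧 : MeasurableSpace 𝓧} {m𝓨 : MeasurableSpace 𝓨}

lemma klDiv_map_measurableEquiv (μ ν : Measure 𝓧) [IsFiniteMeasure μ] [IsFiniteMeasure ν]
    (e : 𝓧 ≃ᵐ 𝓨) : klDiv (μ.map e) (ν.map e) = klDiv μ ν := by
  refine le_antisymm (klDiv_map_le μ ν e.measurable) ?_
  have h := klDiv_map_le (μ.map e) (ν.map e) e.symm.measurable
  rwa [e.map_symm_map, e.map_symm_map] at h

lemma klDiv_prod (μ₁ ν₁ : Measure 𝓧) (μ₂ ν₂ : Measure 𝓨) [IsProbabilityMeasure μ₁]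
    [IsProbabilityMeasure ν₁] [IsProbabilityMeasure μ₂] [IsProbabilityMeasure ν₂] :
    klDiv (μ₁.prod μ₂) (ν₁.prod ν₂) = klDiv μ₁ ν₁ + klDiv μ₂ ν₂ := by
  have h_swap : klDiv (μ₂.prod μ₁) (ν₂.prod μ₁) = klDiv (μ₁.prod μ₂) (μ₁.prod ν₂) := by
    rw [← Measure.prod_swap (μ := μ₁) (ν := μ₂), ← Measure.prod_swap (μ := μ₁) (ν := ν₂)]
    exact klDiv_map_measurableEquiv _ _ MeasurableEquiv.prodComm
  have h_right : klDiv (μ₁.prod μ₂) (μ₁.prod ν₂) = klDiv μ₂ ν₂ := by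
    rw [← h_swap, ← Measure.compProd_const, ← Measure.compProd_const, klDiv_compProd_left]
  have h_chain := klDiv_compProd_eq_add μ₁ ν₁ (Kernel.const 𝓧 μ₂) (Kernel.const 𝓧 ν₂)
  rwa [Measure.compProd_const, Measure.compProd_const, Measure.compProd_const, h_right] at h_chain

lemma klDiv_pi_fin {n : ℕ} {𝓩 : Fin n → Type*} {m𝓩 : ∀ i, MeasurableSpace (𝓩 i)}
    (μ ν : ∀ i, Measure (𝓩 i)) [∀ i, IsProbabilityMeasure (μ i)]
    [∀ i, IsProbabilityMeasure (ν i)] :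
    klDiv (Measure.pi μ) (Measure.pi ν) = ∑ i, klDiv (μ i) (ν i) := by
  induction n with
  | zero =>
    rw [Measure.pi_of_empty μ, Measure.pi_of_empty ν, klDiv_self, Finset.univ_eq_empty,
      Finset.sum_empty]
  | succ n ih =>
    rw [← klDiv_map_measurableEquiv _ _ (MeasurableEquiv.piFinSuccAbove 𝓩 0),
      (measurePreserving_piFinSuccAbove μ 0).map_eq, (measurePreserving_piFinSuccAbove ν 0).map_eq,
      klDiv_prod, ih, Fin.sum_univ_succAbove _ 0]

lemma klDiv_pi {ι : Type*} [Fintype ι] {𝓩 : ι → Type*} {m𝓩 : ∀ i, MeasurableSpace (𝓩 i)}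
    (μ ν : ∀ i, Measure (𝓩 i)) [∀ i, IsProbabilityMeasure (μ i)]
    [∀ i, IsProbabilityMeasure (ν i)] :
    klDiv (Measure.pi μ) (Measure.pi ν) = ∑ i, klDiv (μ i) (ν i) := by
  let e := (Fintype.equivFin ι).symm
  rw [← (measurePreserving_piCongrLeft μ e).map_eq, ← (measurePreserving_piCongrLeft ν e).map_eq,
    klDiv_map_measurableEquiv, klDiv_pi_fin, e.sum_comp fun i => klDiv (μ i) (ν i)]

variable {P Q : Measure 𝓧}

lemma integral_le_toReal_klDiv_add_log_integral_exp [IsProbabilityMeasure P]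
    [IsProbabilityMeasure Q] {f : 𝓧 → ℝ} (hQP : klDiv Q P ≠ ∞) (hfQ : Integrable f Q)
    (hfP : Integrable (fun x => exp (f x)) P) :
    ∫ x, f x ∂Q ≤ (klDiv Q P).toReal + log (∫ x, exp (f x) ∂P) := by
  obtain ⟨hac, hint⟩ := klDiv_ne_top_iff.mp hQP
  have := isProbabilityMeasure_tilted hfP
  have h_gibbs : 0 ≤ ∫ x, llr Q (P.tilted f) x ∂Q := by
    simpa using integral_llr_add_sub_measure_univ_nonneg
      (hac.trans (absolutelyContinuous_tilted hfP)) (integrable_llr_tilted_right hac hfQ hint hfP)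
  rw [integral_llr_tilted_right hac hfQ hfP hint,
    ← toReal_klDiv_of_measure_eq hac (by simp)] at h_gibbs
  linarith

lemma neg_toReal_klDiv_add_log_two_div_le_log_measureReal [IsProbabilityMeasure P]
    [IsProbabilityMeasure Q] (hQP : klDiv Q P ≠ ∞) {A : Set 𝓧} (hA : MeasurableSet A)
    (hQA : 0 < Q.real A) :
    -(((klDiv Q P).toReal + log 2) / Q.real A) ≤ log (P.real A) := by
  have hPA : 0 < P.real A := by
    refine measureReal_nonneg.lt_of_ne' fun h => hQA.ne' ?_
    rw [measureReal_eq_zero_iff] at h ⊢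
    exact (klDiv_ne_top_iff.mp hQP).1 h
  -- the indicator of `A` scaled so that its exponential integrates to at most `2`
  let f : 𝓧 → ℝ := A.indicator fun _ => -log (P.real A)
  have h_exp : (fun x => exp (f x)) = fun x => A.indicator (fun _ => (P.real A)⁻¹) x +
      Aᶜ.indicator (fun _ => (1 : ℝ)) x := by
    ext x
    by_cases hx : x ∈ A <;> simp [f, hx, exp_neg, exp_log hPA]
  have hA_int : Integrable (A.indicator fun _ => (P.real A)⁻¹) P :=
    (integrable_const _).indicator hA
  have hAc_int : Integrable (Aᶜ.indicator fun _ => (1 : ℝ)) P :=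
    (integrable_const _).indicator hA.compl
  have h_exp_int : Integrable (fun x => exp (f x)) P := by
    rw [h_exp]; exact hA_int.add hAc_int
  have h_le_two : ∫ x, exp (f x) ∂P ≤ 2 := by
    rw [h_exp, integral_add hA_int hAc_int, integral_indicator_const _ hA,
      integral_indicator_const _ hA.compl, smul_eq_mul, smul_eq_mul, mul_inv_cancel₀ hPA.ne']
    linarith [measureReal_le_one (μ := P) (s := Aᶜ)]
  have h_dv := integral_le_toReal_klDiv_add_log_integral_exp hQP
    ((integrable_const _).indicator hA) h_exp_int
  rw [integral_indicator_const _ hA, smul_eq_mul] at h_dv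
  have h_log := log_le_log (integral_exp_pos h_exp_int) h_le_two
  rw [neg_le, le_div_iff₀ hQA]
  linarith

end KullbackLeibler

section Moments

open ProbabilityTheory hiding stdGaussian

lemma integral_sum_pi {ι : Type*} [Fintype ι] {Ω : ι → Type*} {mΩ : ∀ i, MeasurableSpace (Ω i)}
    {μ : ∀ i, Measure (Ω i)} [∀ i, IsProbabilityMeasure (μ i)] {X : ∀ i, Ω i → ℝ}
    (hX : ∀ i, Integrable (X i) (μ i)) :
    ∫ ω, ∑ i, X i (ω i) ∂Measure.pi μ = ∑ i, ∫ x, X i x ∂μ i := by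
  rw [integral_finsetSum _ fun i _ => integrable_comp_eval (hX i)]
  exact Finset.sum_congr rfl fun i _ => integral_comp_eval (hX i).aestronglyMeasurable

lemma one_sub_variance_div_sq_le_measureReal {Ω : Type*} {mΩ : MeasurableSpace Ω} {μ : Measure Ω}
    [IsProbabilityMeasure μ] {X : Ω → ℝ} (hX : MemLp X 2 μ) (hX_meas : Measurable X) {c : ℝ}
    (hc : 0 < c) : 1 - Var[X; μ] / c ^ 2 ≤ μ.real {ω | X ω ≤ μ[X] + c} := by
  have h_compl : μ.real {ω | X ω ≤ μ[X] + c}ᶜ ≤ Var[X; μ] / c ^ 2 := by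
    refine ENNReal.toReal_le_of_le_ofReal (by positivity [variance_nonneg X μ]) <|
      (measure_mono fun ω hω => ?_).trans (meas_ge_le_variance_div_sq hX hc)
    rw [Set.mem_compl_iff, Set.mem_ofPred_eq, not_le] at hω
    change c ≤ |X ω - μ[X]|
    exact (le_sub_iff_add_le'.mpr hω.le).trans (le_abs_self _)
  rw [probReal_compl_eq_one_sub (measurableSet_le hX_meas measurable_const)] at h_compl
  linarith

end Moments

section Gaussian

open ProbabilityTheory hiding stdGaussian
open InformationTheory
open scoped ENNReal NNReal

lemma gaussianReal_absolutelyContinuous_gaussianReal (m m' : ℝ) {v v' : ℝ≥0} (hv : v ≠ 0)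
    (hv' : v' ≠ 0) : gaussianReal m v ≪ gaussianReal m' v' :=
  (gaussianReal_absolutelyContinuous m hv).trans (gaussianReal_absolutelyContinuous' m' hv')

lemma llr_gaussianReal (m m' : ℝ) {v v' : ℝ≥0} (hv : v ≠ 0) (hv' : v' ≠ 0) :
    llr (gaussianReal m v) (gaussianReal m' v') =ᵐ[gaussianReal m v]
      fun x => (log (v' / v) + (x - m') ^ 2 / v' - (x - m) ^ 2 / v) / 2 := by
  have h_ac := gaussianReal_absolutelyContinuous m hv
  have h_ac' := gaussianReal_absolutelyContinuous_gaussianReal m m' hv hv'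
  filter_upwards [h_ac' (Measure.rnDeriv_eq_div h_ac (gaussianReal_absolutelyContinuous m' hv')),
    h_ac (rnDeriv_gaussianReal m v), h_ac (rnDeriv_gaussianReal m' v')] with x h_div h h'
  have hv0 : (0 : ℝ) < v := by positivity
  have hv0' : (0 : ℝ) < v' := by positivity
  rw [llr, h_div, h, h', ENNReal.toReal_div, toReal_gaussianPDF, toReal_gaussianPDF,
    log_div (gaussianPDFReal_pos m v x hv).ne' (gaussianPDFReal_pos m' v' x hv').ne',
    gaussianPDFReal, gaussianPDFReal, log_mul (by positivity) (exp_ne_zero _),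
    log_mul (by positivity) (exp_ne_zero _), log_exp, log_exp, log_inv, log_inv,
    log_sqrt (by positivity), log_sqrt (by positivity), log_mul (by positivity) hv0.ne',
    log_mul (by positivity) hv0'.ne', log_div hv0'.ne' hv0.ne']
  ring

lemma integrable_pow_gaussianReal (m : ℝ) (v : ℝ≥0) (k : ℕ) :
    Integrable (fun x => x ^ k) (gaussianReal m v) :=
  (integrable_norm_iff (by fun_prop)).mp <| by
    simpa only [norm_pow, id_eq] using
      (memLp_id_gaussianReal (μ := m) (v := v) k).integrable_norm_pow'

lemma hasDerivAt_gaussianPDFReal (m : ℝ) (v : ℝ≥0) (x : ℝ) :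
    HasDerivAt (gaussianPDFReal m v) (-((x - m) / v) * gaussianPDFReal m v x) x := by
  have h_exponent : HasDerivAt (fun x => -(x - m) ^ 2 / (2 * v)) (-((x - m) / v)) x := by
    convert! (((hasDerivAt_id x).sub_const m).pow 2).neg.div_const (2 * (v : ℝ)) using 1
    simp only [id_eq, Nat.cast_ofNat, Nat.add_one_sub_one, pow_one, mul_one]
    rw [← neg_div, ← mul_neg, mul_div_mul_left _ _ two_ne_zero]
  convert! h_exponent.exp.const_mul (√(2 * π * v))⁻¹ using 1
  rw [gaussianPDFReal]
  ring

lemma integrable_mul_gaussianPDFReal {m : ℝ} {v : ℝ≥0} (hv : v ≠ 0) {g : ℝ → ℝ}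
    (hg : Integrable g (gaussianReal m v)) : Integrable fun x => g x * gaussianPDFReal m v x := by
  rw [gaussianReal_of_var_ne_zero m hv, integrable_withDensity_iff
    (measurable_gaussianPDF m v) (ae_of_all _ fun _ => gaussianPDF_lt_top)] at hg
  simpa only [toReal_gaussianPDF] using hg

lemma integral_sub_mul_gaussianReal (m : ℝ) (v : ℝ≥0) {f f' : ℝ → ℝ}
    (hf : ∀ x, HasDerivAt f (f' x) x) (hf_int : Integrable f (gaussianReal m v))
    (hf'_int : Integrable f' (gaussianReal m v))
    (hmul_int : Integrable (fun x => (x - m) * f x) (gaussianReal m v)) :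
    ∫ x, (x - m) * f x ∂gaussianReal m v = v * ∫ x, f' x ∂gaussianReal m v := by
  rcases eq_or_ne v 0 with rfl | hv
  · simp
  have hv0 : (v : ℝ) ≠ 0 := NNReal.coe_ne_zero.mpr hv
  have h_mul_deriv_int : Integrable (f * fun x => -((x - m) / v) * gaussianPDFReal m v x) :=
    ((integrable_mul_gaussianPDFReal hv hmul_int).const_mul (-(v : ℝ)⁻¹)).congr <|
      ae_of_all _ fun x => by simp only [Pi.mul_apply]; ring
  have h_parts := integral_mul_deriv_eq_deriv_mul_of_integrable (fun x _ => hf x)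
    (fun x _ => hasDerivAt_gaussianPDFReal m v x) h_mul_deriv_int
    (integrable_mul_gaussianPDFReal hv hf'_int) (integrable_mul_gaussianPDFReal hv hf_int)
  rw [integral_gaussianReal_eq_integral_smul hv, integral_gaussianReal_eq_integral_smul hv]
  calc ∫ x, gaussianPDFReal m v x • ((x - m) * f x)
      = -v * ∫ x, f x * (-((x - m) / v) * gaussianPDFReal m v x) := by
        rw [← integral_const_mul]
        congr 1 with x
        rw [smul_eq_mul]
        field_simp
    _ = v * ∫ x, gaussianPDFReal m v x • f' x := by
        rw [h_parts]
        simp only [smul_eq_mul, mul_comm (gaussianPDFReal m v _)]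
        ring

lemma integral_pow_add_two_gaussianReal (m : ℝ) (v : ℝ≥0) (k : ℕ) :
    ∫ x, x ^ (k + 2) ∂gaussianReal m v = m * ∫ x, x ^ (k + 1) ∂gaussianReal m v +
      (k + 1) * v * ∫ x, x ^ k ∂gaussianReal m v := by
  have h_split (x : ℝ) : (x - m) * x ^ (k + 1) = x ^ (k + 2) - m * x ^ (k + 1) := by ring
  have h_int := integrable_pow_gaussianReal m v
  have h_sub_int : Integrable (fun x => x ^ (k + 2) - m * x ^ (k + 1)) (gaussianReal m v) :=
    (h_int _).sub ((h_int _).const_mul m)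
  have h_stein := integral_sub_mul_gaussianReal m v (f := fun x => x ^ (k + 1))
    (f' := fun x => (k + 1) * x ^ k) (fun x => by simpa using hasDerivAt_pow (k + 1) x)
    (h_int _) ((h_int k).const_mul _) (by simpa only [h_split] using h_sub_int)
  simp only [h_split] at h_stein
  rw [integral_sub (h_int _) ((h_int _).const_mul m), integral_const_mul,
    integral_const_mul] at h_stein
  linarith

lemma integral_sq_gaussianReal (m : ℝ) (v : ℝ≥0) :
    ∫ x, x ^ 2 ∂gaussianReal m v = m ^ 2 + v := by
  have h := integral_pow_add_two_gaussianReal m v 0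
  simp only [zero_add, pow_one, pow_zero, integral_id_gaussianReal, integral_const, probReal_univ,
    smul_eq_mul, CharP.cast_eq_zero] at h
  rw [h]
  ring

lemma memLp_two_sq_gaussianReal (m : ℝ) (v : ℝ≥0) :
    MemLp (fun x => x ^ 2) 2 (gaussianReal m v) := by
  rw [memLp_two_iff_integrable_sq (by fun_prop)]
  simpa only [← pow_mul] using integrable_pow_gaussianReal m v 4

lemma variance_sq_gaussianReal (m : ℝ) (v : ℝ≥0) :
    Var[fun x => x ^ 2; gaussianReal m v] = 4 * m ^ 2 * v + 2 * v ^ 2 := by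
  have h_three := integral_pow_add_two_gaussianReal m v 1
  have h_four := integral_pow_add_two_gaussianReal m v 2
  rw [variance_eq_sub (memLp_two_sq_gaussianReal m v)]
  simp only [Pi.pow_apply, ← pow_mul, Nat.reduceMul, Nat.reduceAdd, pow_one,
    integral_sq_gaussianReal, integral_id_gaussianReal, Nat.cast_one, Nat.cast_ofNat] at *
  rw [h_four, h_three]
  ring

lemma hasLaw_sub_mul_gaussianReal (m a t : ℝ) (v : ℝ≥0) :
    HasLaw (fun x => a - t * x) (gaussianReal (a - t * m) (.mk (t ^ 2) (sq_nonneg t) * v))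
      (gaussianReal m v) :=
  gaussianReal_const_sub (gaussianReal_const_mul HasLaw.id t) a

lemma memLp_two_sub_mul_sq_gaussianReal (m a t : ℝ) (v : ℝ≥0) :
    MemLp (fun x => (a - t * x) ^ 2) 2 (gaussianReal m v) := by
  have h_law := hasLaw_sub_mul_gaussianReal m a t v
  have h := memLp_two_sq_gaussianReal (a - t * m) (.mk (t ^ 2) (sq_nonneg t) * v)
  rw [← h_law.map_eq] at h
  exact h.comp_of_map h_law.aemeasurable

lemma integral_sub_mul_sq_gaussianReal (m a t : ℝ) (v : ℝ≥0) :
    ∫ x, (a - t * x) ^ 2 ∂gaussianReal m v = (a - t * m) ^ 2 + t ^ 2 * v := by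
  have h_law := hasLaw_sub_mul_gaussianReal m a t v
  have h := integral_sq_gaussianReal (a - t * m) (.mk (t ^ 2) (sq_nonneg t) * v)
  rwa [← h_law.map_eq, integral_map h_law.aemeasurable (by fun_prop), NNReal.coe_mul,
    NNReal.coe_mk] at h

lemma variance_sub_mul_sq_gaussianReal (m a t : ℝ) (v : ℝ≥0) :
    Var[fun x => (a - t * x) ^ 2; gaussianReal m v] =
      4 * (a - t * m) ^ 2 * (t ^ 2 * v) + 2 * (t ^ 2 * v) ^ 2 := by
  have h_law := hasLaw_sub_mul_gaussianReal m a t v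
  have h := variance_sq_gaussianReal (a - t * m) (.mk (t ^ 2) (sq_nonneg t) * v)
  rwa [← h_law.map_eq, variance_map (by fun_prop) h_law.aemeasurable, NNReal.coe_mul,
    NNReal.coe_mk] at h

lemma integrable_sub_sq_gaussianReal (m a : ℝ) (v : ℝ≥0) :
    Integrable (fun x => (x - a) ^ 2) (gaussianReal m v) := by
  simpa only [one_mul, sub_sq_comm a] using
    (memLp_two_sub_mul_sq_gaussianReal m a 1 v).integrable one_le_two

lemma integral_sub_sq_gaussianReal (m a : ℝ) (v : ℝ≥0) :
    ∫ x, (x - a) ^ 2 ∂gaussianReal m v = (m - a) ^ 2 + v := by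
  simpa only [one_mul, one_pow, sub_sq_comm a] using integral_sub_mul_sq_gaussianReal m a 1 v

lemma klDiv_gaussianReal_ne_top (m m' : ℝ) {v v' : ℝ≥0} (hv : v ≠ 0) (hv' : v' ≠ 0) :
    klDiv (gaussianReal m v) (gaussianReal m' v') ≠ ∞ := by
  refine klDiv_ne_top (gaussianReal_absolutelyContinuous_gaussianReal m m' hv hv') ?_
  rw [integrable_congr (llr_gaussianReal m m' hv hv')]
  exact (((integrable_const _).add ((integrable_sub_sq_gaussianReal m m' v).div_const _)).sub
    ((integrable_sub_sq_gaussianReal m m v).div_const _)).div_const 2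

lemma toReal_klDiv_gaussianReal (m m' : ℝ) {v v' : ℝ≥0} (hv : v ≠ 0) (hv' : v' ≠ 0) :
    (klDiv (gaussianReal m v) (gaussianReal m' v')).toReal =
      (log (v' / v) + (v + (m - m') ^ 2) / v' - 1) / 2 := by
  have h_int (a : ℝ) (c : ℝ≥0) := (integrable_sub_sq_gaussianReal m a v).div_const (c : ℝ)
  have h_add_int : Integrable (fun x => log (v' / v) + (x - m') ^ 2 / v') (gaussianReal m v) :=
    (integrable_const _).add (h_int m' v')
  rw [toReal_klDiv_of_measure_eq (gaussianReal_absolutelyContinuous_gaussianReal m m' hv hv')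
    (by simp), integral_congr_ae (llr_gaussianReal m m' hv hv'), integral_div,
    integral_sub h_add_int (h_int m v), integral_add (integrable_const _) (h_int m' v'),
    integral_div, integral_div, integral_sub_sq_gaussianReal, integral_sub_sq_gaussianReal,
    integral_const, probReal_univ, one_smul, sub_self, zero_pow two_ne_zero, zero_add,
    div_self (NNReal.coe_ne_zero.mpr hv), add_comm (_ ^ 2)]

end Gaussian

section Rotation

lemma dSig_diagonal {n : ℕ} (lam w v : Fin n → ℝ) :
    dSig (diagonal lam) w v = ∑ i, lam i * (w i - v i) ^ 2 := by
  simp only [dSig, dotProduct, mulVec_diagonal, Pi.sub_apply]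
  exact Finset.sum_congr rfl fun i _ => by ring

lemma dSig_mul_mul_transpose {n : ℕ} (A U : Matrix (Fin n) (Fin n) ℝ) (w v : Fin n → ℝ) :
    dSig (U * A * Uᵀ) w v = dSig A (Uᵀ *ᵥ w) (Uᵀ *ᵥ v) := by
  rw [dSig, dSig, ← mulVec_sub, ← mulVec_mulVec, ← mulVec_mulVec, dotProduct_mulVec,
    ← mulVec_transpose]

lemma measurePreserving_mulVec_stdGaussian {n : ℕ} {M : Matrix (Fin n) (Fin n) ℝ}
    (hM : M ∈ orthogonalGroup (Fin n) ℝ) :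
    MeasurePreserving (M *ᵥ ·) (stdGaussian n) (stdGaussian n) := by
  let e : EuclideanSpace ℝ (Fin n) ≃ₗᵢ[ℝ] EuclideanSpace ℝ (Fin n) :=
    Unitary.linearIsometryEquiv
      ⟨toEuclideanCLM (n := Fin n) (𝕜 := ℝ) M, Unitary.map_mem toEuclideanCLM hM⟩
  have h_toLp : MeasurePreserving (MeasurableEquiv.toLp 2 (Fin n → ℝ)) (stdGaussian n)
      (ProbabilityTheory.stdGaussian (EuclideanSpace ℝ (Fin n))) :=
    ⟨MeasurableEquiv.measurable _, ProbabilityTheory.map_pi_eq_stdGaussian⟩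
  have h_rot : MeasurePreserving e (ProbabilityTheory.stdGaussian (EuclideanSpace ℝ (Fin n)))
      (ProbabilityTheory.stdGaussian (EuclideanSpace ℝ (Fin n))) :=
    ⟨e.continuous.measurable, ProbabilityTheory.stdGaussian_map e⟩
  exact (h_toLp.symm _).comp (h_rot.comp h_toLp)

lemma measurable_dSig {n : ℕ} (A : Matrix (Fin n) (Fin n) ℝ) (w : Fin n → ℝ) :
    Measurable (dSig A w) := by
  unfold dSig
  fun_prop

lemma measurable_dSig_smul {n : ℕ} (A : Matrix (Fin n) (Fin n) ℝ) (w : Fin n → ℝ) (t : ℝ) :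
    Measurable fun z => dSig A w (t • z) :=
  (measurable_dSig A w).comp (measurable_const_smul t)

lemma measurableSet_dSig_le {n : ℕ} (A : Matrix (Fin n) (Fin n) ℝ) (w : Fin n → ℝ) (a t d : ℝ) :
    MeasurableSet {z : Fin n → ℝ | a * dSig A w (t • z) ≤ d} :=
  measurableSet_le ((measurable_dSig_smul A w t).const_mul a) measurable_const

lemma stdGaussian_setOf_dSig_le {n : ℕ} (A : Matrix (Fin n) (Fin n) ℝ)
    {U : Matrix (Fin n) (Fin n) ℝ} (hU : U ∈ orthogonalGroup (Fin n) ℝ) (w : Fin n → ℝ)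
    (a t d : ℝ) :
    stdGaussian n {z | a * dSig (U * A * Uᵀ) w (t • z) ≤ d} =
      stdGaussian n {z | a * dSig A (Uᵀ *ᵥ w) (t • z) ≤ d} := by
  have h_rot : MeasurePreserving (Uᵀ *ᵥ ·) (stdGaussian n) (stdGaussian n) :=
    measurePreserving_mulVec_stdGaussian (Unitary.star_mem hU)
  rw [← h_rot.measure_preimage (measurableSet_dSig_le A _ a t d).nullMeasurableSet]
  simp only [dSig_mul_mul_transpose, mulVec_smul, Set.preimage_ofPred_eq]

end Rotation

section RateAndScaling

variable {n : ℕ} {lam : Fin n → ℝ} {T : ℝ}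

lemma one_add_mul_pos (hlam : 0 ≤ lam) (hT : 0 ≤ T) (i : Fin n) : 0 < 1 + lam i * T :=
  add_pos_of_pos_of_nonneg one_pos (mul_nonneg (hlam i) hT)

lemma dim_pos_of_pos (hlam : 0 < lam) : 0 < n := by
  obtain ⟨-, i, -⟩ := Pi.lt_def.mp hlam
  exact i.pos

lemma sum_log_one_add_mul (lam : Fin n → ℝ) (T : ℝ) :
    ∑ i, log (1 + lam i * T) = 2 * (n * Rrc lam T * log 2) := by
  rcases eq_or_ne n 0 with rfl | hn
  · simp
  have h_log : log 2 ≠ 0 := (log_pos one_lt_two).ne'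
  simp only [Rrc, logb, ← Finset.sum_div]
  generalize ∑ i, log (1 + lam i * T) = S
  field_simp

lemma continuousOn_Rrc (hlam : 0 ≤ lam) : ContinuousOn (Rrc lam) (Set.Ici 0) := by
  refine continuousOn_const.mul (continuousOn_finsetSum _ fun i _ => ?_)
  refine ContinuousOn.div_const (ContinuousOn.log (by fun_prop) fun T hT => ?_) _
  exact (one_add_mul_pos hlam hT i).ne'

lemma exists_le_Rrc (hlam : 0 < lam) (R : ℝ) : ∃ T, 0 ≤ T ∧ R ≤ Rrc lam T := by
  obtain ⟨hlam0, i, hi⟩ := Pi.lt_def.mp hlam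
  have hn : (0 : ℝ) < n := Nat.cast_pos.mpr i.pos
  -- the `i`-th summand alone already contributes `R`
  have hT : 0 ≤ 2 ^ (2 * n * R) / lam i := div_nonneg (by positivity) (hlam0 i)
  refine ⟨_, hT, ?_⟩
  have h_arg : 1 + lam i * (2 ^ (2 * n * R) / lam i) = 1 + (2 : ℝ) ^ (2 * n * R) := by
    rw [mul_div_cancel₀ _ hi.ne']
  have h_term : 2 * n * R ≤ logb 2 (1 + lam i * (2 ^ (2 * n * R) / lam i)) := by
    rw [h_arg, le_logb_iff_rpow_le one_lt_two (by positivity)]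
    linarith
  have h_le_sum := Finset.single_le_sum (f := fun j => logb 2 (1 + lam j * _)) (fun j _ =>
    logb_nonneg one_lt_two (le_add_of_nonneg_right (mul_nonneg (hlam0 j) hT))) (Finset.mem_univ i)
  rw [Rrc, one_div_mul_eq_div, le_div_iff₀ (by positivity)]
  linarith

lemma exists_pos_Rrc_eq (hlam : 0 < lam) {R : ℝ} (hR : 0 < R) : ∃ T, 0 < T ∧ Rrc lam T = R := by
  obtain ⟨B, hB0, hB⟩ := exists_le_Rrc hlam R
  have h_zero : Rrc lam 0 = 0 := by simp [Rrc]
  obtain ⟨T, hT, rfl⟩ := intermediate_value_Icc hB0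
    ((continuousOn_Rrc hlam.le).mono Set.Icc_subset_Ici_self) ⟨h_zero.trans_le hR.le, hB⟩
  exact ⟨T, hT.1.lt_of_ne (by rintro rfl; exact hR.ne' h_zero), rfl⟩

lemma Trc_pos (hlam : 0 < lam) {R : ℝ} (hR : 0 < R) : 0 < Trc lam R :=
  (Classical.epsilon_spec (exists_pos_Rrc_eq hlam hR)).1

lemma Rrc_Trc (hlam : 0 < lam) {R : ℝ} (hR : 0 < R) : Rrc lam (Trc lam R) = R :=
  (Classical.epsilon_spec (exists_pos_Rrc_eq hlam hR)).2

lemma two_mul_Rrc_mul_log_two_le (hlam : 0 < lam) (hsum : ∑ i, lam i = n) (hT : 0 ≤ T) :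
    2 * Rrc lam T * log 2 ≤ T := by
  have hn : (0 : ℝ) < n := Nat.cast_pos.mpr (dim_pos_of_pos hlam)
  refine le_of_mul_le_mul_left ?_ hn
  calc n * (2 * Rrc lam T * log 2) = ∑ i, log (1 + lam i * T) := by
        rw [sum_log_one_add_mul]; ring
    _ ≤ ∑ i, lam i * T := Finset.sum_le_sum fun i _ => by
        linarith [log_le_sub_one_of_pos (one_add_mul_pos hlam.le hT i)]
    _ = n * T := by rw [← Finset.sum_mul, hsum]

lemma sum_div_one_add_mul_pos (hlam : 0 < lam) (hT : 0 ≤ T) :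
    0 < ∑ i, lam i / (1 + lam i * T) := by
  obtain ⟨hlam0, i, hi⟩ := Pi.lt_def.mp hlam
  exact Finset.sum_pos' (fun j _ => div_nonneg (hlam0 j) (one_add_mul_pos hlam0 hT j).le)
    ⟨i, Finset.mem_univ i, div_pos hi (one_add_mul_pos hlam0 hT i)⟩

lemma sq_tauDef_mul_sum (hlam : 0 < lam) (hT : 0 ≤ T) (w : Fin n → ℝ) :
    tauDef lam w T ^ 2 * ∑ i, lam i / (1 + lam i * T) =
      T * ∑ i, w i ^ 2 * lam i ^ 2 / (1 + lam i * T) ^ 2 := by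
  have h_pos := sum_div_one_add_mul_pos hlam hT
  rw [tauDef, div_pow, sq_sqrt h_pos.le, sq_sqrt (by positivity), div_mul_cancel₀ _ h_pos.ne']

lemma sq_tauDef_le (hlam : 0 < lam) (hT : 0 ≤ T) {w : Fin n → ℝ} {b : ℝ}
    (hw : ∀ i, w i ^ 2 ≤ b) : tauDef lam w T ^ 2 ≤ b := by
  refine le_of_mul_le_mul_right ?_ (sum_div_one_add_mul_pos hlam hT)
  rw [sq_tauDef_mul_sum hlam hT, Finset.mul_sum, Finset.mul_sum]
  refine Finset.sum_le_sum fun i _ => ?_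
  have h_den := one_add_mul_pos hlam.le hT i
  have h_ratio_nonneg : 0 ≤ lam i * T / (1 + lam i * T) :=
    div_nonneg (mul_nonneg (hlam.le i) hT) h_den.le
  have h_ratio_le : lam i * T / (1 + lam i * T) ≤ 1 := (div_le_one h_den).mpr (by linarith)
  have h_weight : 0 ≤ lam i / (1 + lam i * T) := div_nonneg (hlam.le i) h_den.le
  calc T * (w i ^ 2 * lam i ^ 2 / (1 + lam i * T) ^ 2)
      = w i ^ 2 * (lam i * T / (1 + lam i * T)) * (lam i / (1 + lam i * T)) := by
        field_simp
    _ ≤ b * 1 * (lam i / (1 + lam i * T)) :=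
        mul_le_mul_of_nonneg_right (mul_le_mul (hw i) h_ratio_le h_ratio_nonneg
          ((sq_nonneg _).trans (hw i))) h_weight
    _ = b * (lam i / (1 + lam i * T)) := by rw [mul_one]

end RateAndScaling

section TestChannel

open ProbabilityTheory hiding stdGaussian
open InformationTheory
open scoped ENNReal NNReal

variable {n : ℕ} {lam w : Fin n → ℝ} {T b η : ℝ}

/-- The mean `T λᵢ wᵢ / (τ (1 + λᵢ T))` of the `i`-th coordinate of the Gaussian test channel. If
`τ = 0` the division gives `0`; this is harmless because then `λᵢ wᵢ = 0` for all `i`. -/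
noncomputable def testMean (lam w : Fin n → ℝ) (T : ℝ) (i : Fin n) : ℝ :=
  T * lam i * w i / (tauDef lam w T * (1 + lam i * T))

/-- The variance `1 / (1 + λᵢ T)` of the `i`-th coordinate of the Gaussian test channel. -/
noncomputable def testVar (lam : Fin n → ℝ) (T : ℝ) (i : Fin n) : ℝ≥0 :=
  (1 + lam i * T)⁻¹.toNNReal

/-- The Gaussian test channel: the law of a codeword `z` with independent coordinates under which
`τ z` typically reproduces `w` at distortion `D_rc^λ(w, T)`. It replaces the standard Gaussian law
of the codeword in the change of measure. -/
noncomputable def testChannel (lam w : Fin n → ℝ) (T : ℝ) : Measure (Fin n → ℝ) :=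
  Measure.pi fun i => gaussianReal (testMean lam w T i) (testVar lam T i)

instance : IsProbabilityMeasure (testChannel lam w T) := by
  unfold testChannel
  infer_instance

instance : IsProbabilityMeasure (stdGaussian n) := by
  unfold stdGaussian
  infer_instance

lemma coe_testVar (hlam : 0 ≤ lam) (hT : 0 ≤ T) (i : Fin n) :
    (testVar lam T i : ℝ) = (1 + lam i * T)⁻¹ :=
  coe_toNNReal _ (inv_nonneg.mpr (one_add_mul_pos hlam hT i).le)

lemma testVar_ne_zero (hlam : 0 ≤ lam) (hT : 0 ≤ T) (i : Fin n) : testVar lam T i ≠ 0 :=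
  (toNNReal_pos.mpr (inv_pos.mpr (one_add_mul_pos hlam hT i))).ne'

lemma mul_eq_zero_of_tauDef_eq_zero (hlam : 0 < lam) (hT : 0 < T) (h : tauDef lam w T = 0)
    (i : Fin n) : lam i * w i = 0 := by
  have h_sum := sq_tauDef_mul_sum hlam hT.le w
  rw [h, zero_pow two_ne_zero, zero_mul, eq_comm, mul_eq_zero, or_iff_right hT.ne',
    Finset.sum_eq_zero_iff_of_nonneg fun _ _ => by positivity] at h_sum
  have h_den := (one_add_mul_pos hlam.le hT.le i).ne'
  simpa [h_den, or_comm] using h_sum i (Finset.mem_univ i)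

lemma tauDef_mul_testMean (hlam : 0 < lam) (hT : 0 < T) (i : Fin n) :
    tauDef lam w T * testMean lam w T i = T * lam i * w i / (1 + lam i * T) := by
  rw [testMean]
  rcases eq_or_ne (tauDef lam w T) 0 with h | h
  · rw [h, zero_mul, mul_assoc, mul_eq_zero_of_tauDef_eq_zero hlam hT h, mul_zero, zero_div]
  · rw [← mul_div_assoc, mul_div_mul_left _ _ h]

lemma sub_tauDef_mul_testMean (hlam : 0 < lam) (hT : 0 < T) (i : Fin n) :
    w i - tauDef lam w T * testMean lam w T i = w i / (1 + lam i * T) := by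
  rw [tauDef_mul_testMean hlam hT, eq_div_iff (one_add_mul_pos hlam.le hT.le i).ne', sub_mul,
    div_mul_cancel₀ _ (one_add_mul_pos hlam.le hT.le i).ne']
  ring

lemma sum_sq_testMean_le (hlam : 0 < lam) (hT : 0 < T) :
    ∑ i, testMean lam w T i ^ 2 ≤ T * ∑ i, lam i / (1 + lam i * T) := by
  have h_nonneg := mul_nonneg hT.le (sum_div_one_add_mul_pos hlam hT.le).le
  rcases eq_or_ne (tauDef lam w T) 0 with h | h
  · simpa [testMean, h] using h_nonneg
  · refine le_of_mul_le_mul_left (le_of_eq ?_) (pow_pos (lt_of_le_of_ne' ?_ h) 2)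
    · rw [mul_left_comm, sq_tauDef_mul_sum hlam hT.le, Finset.mul_sum, ← mul_assoc, Finset.mul_sum]
      refine Finset.sum_congr rfl fun i _ => ?_
      rw [← mul_pow, tauDef_mul_testMean hlam hT, div_pow]
      ring
    · exact div_nonneg (sqrt_nonneg _) (sqrt_nonneg _)

lemma klDiv_testChannel_stdGaussian (lam w : Fin n → ℝ) (T : ℝ) :
    klDiv (testChannel lam w T) (stdGaussian n) =
      ∑ i, klDiv (gaussianReal (testMean lam w T i) (testVar lam T i)) (gaussianReal 0 1) :=
  klDiv_pi _ _

lemma klDiv_testChannel_ne_top (hlam : 0 ≤ lam) (hT : 0 ≤ T) :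
    klDiv (testChannel lam w T) (stdGaussian n) ≠ ∞ := by
  rw [klDiv_testChannel_stdGaussian, ENNReal.sum_ne_top]
  exact fun i _ => klDiv_gaussianReal_ne_top _ _ (testVar_ne_zero hlam hT i) one_ne_zero

lemma toReal_klDiv_testChannel_le (hlam : 0 < lam) (hT : 0 < T) :
    (klDiv (testChannel lam w T) (stdGaussian n)).toReal ≤ n * Rrc lam T * log 2 := by
  have h_term (i : Fin n) :
      (klDiv (gaussianReal (testMean lam w T i) (testVar lam T i)) (gaussianReal 0 1)).toReal =
        (log (1 + lam i * T) + testMean lam w T i ^ 2 - T * (lam i / (1 + lam i * T))) / 2 := by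
    have h_den := one_add_mul_pos hlam.le hT.le i
    rw [toReal_klDiv_gaussianReal _ _ (testVar_ne_zero hlam.le hT.le i) one_ne_zero,
      coe_testVar hlam.le hT.le, NNReal.coe_one, one_div, inv_inv]
    field_simp
    ring
  calc (klDiv (testChannel lam w T) (stdGaussian n)).toReal
      = (∑ i, log (1 + lam i * T) + ∑ i, testMean lam w T i ^ 2 -
          T * ∑ i, lam i / (1 + lam i * T)) / 2 := by
        rw [klDiv_testChannel_stdGaussian, ENNReal.toReal_sum fun i _ =>
          klDiv_gaussianReal_ne_top _ _ (testVar_ne_zero hlam.le hT.le i) one_ne_zero]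
        simp only [h_term, ← Finset.sum_div, Finset.sum_sub_distrib, Finset.sum_add_distrib,
          Finset.mul_sum]
    _ ≤ (∑ i, log (1 + lam i * T)) / 2 := by linarith [sum_sq_testMean_le (w := w) hlam hT]
    _ = n * Rrc lam T * log 2 := by rw [sum_log_one_add_mul]; ring

lemma memLp_two_dSig_testChannel (lam w : Fin n → ℝ) (T t : ℝ) :
    MemLp (fun z => dSig (diagonal lam) w (t • z)) 2 (testChannel lam w T) := by
  simp only [dSig_diagonal, Pi.smul_apply, smul_eq_mul]
  exact memLp_finsetSum _ fun i _ => ((memLp_two_sub_mul_sq_gaussianReal _ _ t _).const_mul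
    (lam i)).comp_measurePreserving (measurePreserving_eval _ i)

lemma integral_dSig_testChannel (hlam : 0 < lam) (hT : 0 < T) :
    ∫ z, dSig (diagonal lam) w (tauDef lam w T • z) ∂testChannel lam w T =
      n * DrcV lam w T := by
  have hn : (n : ℝ) ≠ 0 := Nat.cast_ne_zero.mpr (dim_pos_of_pos hlam).ne'
  have h_int (i : Fin n) := (memLp_two_sub_mul_sq_gaussianReal (testMean lam w T i) (w i)
    (tauDef lam w T) (testVar lam T i)).integrable one_le_two |>.const_mul (lam i)
  simp only [dSig_diagonal, Pi.smul_apply, smul_eq_mul]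
  calc ∫ z, ∑ i, lam i * (w i - tauDef lam w T * z i) ^ 2 ∂testChannel lam w T
      = ∑ i, lam i * ((w i / (1 + lam i * T)) ^ 2 + tauDef lam w T ^ 2 * (1 + lam i * T)⁻¹) := by
        rw [testChannel, integral_sum_pi h_int]
        simp only [integral_const_mul, integral_sub_mul_sq_gaussianReal,
          sub_tauDef_mul_testMean hlam hT, coe_testVar hlam.le hT.le]
    _ = ∑ i, w i ^ 2 * lam i / (1 + lam i * T) ^ 2 +
          tauDef lam w T ^ 2 * ∑ i, lam i / (1 + lam i * T) := by
        rw [Finset.mul_sum, ← Finset.sum_add_distrib]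
        exact Finset.sum_congr rfl fun i _ => by rw [div_pow]; ring
    _ = ∑ i, w i ^ 2 * lam i / (1 + lam i * T) := by
        rw [sq_tauDef_mul_sum hlam hT.le, Finset.mul_sum, ← Finset.sum_add_distrib]
        refine Finset.sum_congr rfl fun i _ => ?_
        have h_den := one_add_mul_pos hlam.le hT.le i
        field_simp
    _ = n * DrcV lam w T := by rw [DrcV, one_div, mul_inv_cancel_left₀ hn]

lemma variance_coordinate_testChannel_le (hlam : 0 < lam) (hT : 0 < T) (hw : ∀ i, w i ^ 2 ≤ b)
    (i : Fin n) :
    Var[fun x => lam i * (w i - tauDef lam w T * x) ^ 2;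
      gaussianReal (testMean lam w T i) (testVar lam T i)] ≤ 6 * b ^ 2 / T * lam i := by
  set u := (1 + lam i * T)⁻¹ with hu
  have h_den := one_add_mul_pos hlam.le hT.le i
  have hlamT := mul_nonneg (hlam.le i) hT.le
  have hb : 0 ≤ b := (sq_nonneg _).trans (hw i)
  have hu0 : 0 ≤ u := inv_nonneg.mpr h_den.le
  have hu1 : u ≤ 1 := inv_le_one_of_one_le₀ (le_add_of_nonneg_right hlamT)
  have h_lam_u : lam i * u ≤ T⁻¹ := by
    rw [hu, ← div_eq_mul_inv, div_le_iff₀ h_den, inv_mul_eq_div, le_div_iff₀ hT]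
    linarith
  have h_error : (w i * u) ^ 2 ≤ b := by
    rw [mul_pow]
    exact (mul_le_of_le_one_right (sq_nonneg _) (pow_le_one₀ hu0 hu1)).trans (hw i)
  have h_tau := sq_tauDef_le hlam hT.le hw
  rw [variance_const_mul, variance_sub_mul_sq_gaussianReal, sub_tauDef_mul_testMean hlam hT,
    coe_testVar hlam.le hT.le, div_eq_mul_inv, ← hu]
  calc lam i ^ 2 * (4 * (w i * u) ^ 2 * (tauDef lam w T ^ 2 * u) + 2 * (tauDef lam w T ^ 2 * u) ^ 2)
      ≤ lam i ^ 2 * (4 * b * (b * u) + 2 * (b * u) ^ 2) := by gcongr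
    _ = lam i * (lam i * u) * (4 * b ^ 2 + 2 * b ^ 2 * u) := by ring
    _ ≤ lam i * T⁻¹ * (4 * b ^ 2 + 2 * b ^ 2 * 1) := by
        have h_lam : 0 ≤ lam i := hlam.le i
        exact mul_le_mul (mul_le_mul_of_nonneg_left h_lam_u h_lam) (by gcongr) (by positivity)
          (by positivity)
    _ = 6 * b ^ 2 / T * lam i := by ring

lemma variance_dSig_testChannel_le (hlam : 0 < lam) (hT : 0 < T) (hw : ∀ i, w i ^ 2 ≤ b) :
    Var[fun z => dSig (diagonal lam) w (tauDef lam w T • z); testChannel lam w T] ≤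
      6 * b ^ 2 / T * ∑ i, lam i := by
  have h_memLp (i : Fin n) := (memLp_two_sub_mul_sq_gaussianReal (testMean lam w T i) (w i)
    (tauDef lam w T) (testVar lam T i)).const_mul (lam i)
  have h_sum := variance_sum_pi h_memLp
  rw [Finset.mul_sum]
  refine le_trans (le_of_eq ?_) (Finset.sum_le_sum fun i _ =>
    variance_coordinate_testChannel_le hlam hT hw i)
  rw [← h_sum, testChannel]
  congr 1 with z
  simp only [dSig_diagonal, Pi.smul_apply, smul_eq_mul, Finset.sum_apply]

lemma one_sub_le_testChannel_real (hlam : 0 < lam) (hsum : ∑ i, lam i = n) (hT : 0 < T)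
    (hw : ∀ i, w i ^ 2 ≤ b) (hη : 0 < η) :
    1 - 6 * b ^ 2 / (T * n * η ^ 2) ≤ (testChannel lam w T).real
      {z | 1 / n * dSig (diagonal lam) w (tauDef lam w T • z) ≤ DrcV lam w T + η} := by
  have hn : (0 : ℝ) < n := Nat.cast_pos.mpr (dim_pos_of_pos hlam)
  have h_cheb := one_sub_variance_div_sq_le_measureReal
    (memLp_two_dSig_testChannel lam w T (tauDef lam w T)) (measurable_dSig_smul _ _ _)
    (mul_pos hn hη)
  rw [integral_dSig_testChannel hlam hT, ← mul_add] at h_cheb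
  have h_var : Var[fun z => dSig (diagonal lam) w (tauDef lam w T • z); testChannel lam w T] /
      (n * η) ^ 2 ≤ 6 * b ^ 2 / (T * n * η ^ 2) :=
    calc _ ≤ (6 * b ^ 2 / T * ∑ i, lam i) / (n * η) ^ 2 := by
          gcongr
          exact variance_dSig_testChannel_le hlam hT hw
      _ = 6 * b ^ 2 / (T * n * η ^ 2) := by
          rw [hsum]
          field_simp
  simp only [one_div_mul_eq_div, div_le_iff₀' hn]
  linarith

end TestChannel

section SuccessProbability

variable {n : ℕ} {lam w : Fin n → ℝ} {T b η δ : ℝ}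

lemma neg_mul_one_add_two_mul_le_log_stdGaussian_real (hlam : 0 < lam) (hsum : ∑ i, lam i = n)
    (hT : 0 < T) (hw : ∀ i, w i ^ 2 ≤ b) (hη : 0 < η) (hbδ : 6 * b ^ 2 / (T * n * η ^ 2) ≤ δ)
    (hδ : δ ≤ 1 / 2) :
    -((n * Rrc lam T * log 2 + log 2) * (1 + 2 * δ)) ≤ log ((stdGaussian n).real
      {z | 1 / n * dSig (diagonal lam) w (tauDef lam w T • z) ≤ DrcV lam w T + η}) := by
  set A := {z | 1 / n * dSig (diagonal lam) w (tauDef lam w T • z) ≤ DrcV lam w T + η}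
  have hδ0 : 0 ≤ δ := le_trans (by positivity) hbδ
  have h_prob : 1 - δ ≤ (testChannel lam w T).real A :=
    (sub_le_sub_left hbδ 1).trans (one_sub_le_testChannel_real hlam hsum hT hw hη)
  have h_prob_pos : 0 < (testChannel lam w T).real A := by linarith
  have h_inv_prob : 1 ≤ (1 + 2 * δ) * (testChannel lam w T).real A := by nlinarith
  have h_kl := toReal_klDiv_testChannel_le (w := w) hlam hT
  have h_kl_nonneg : 0 ≤ n * Rrc lam T * log 2 := ENNReal.toReal_nonneg.trans h_kl
  refine le_trans (neg_le_neg ?_) (neg_toReal_klDiv_add_log_two_div_le_log_measureReal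
    (klDiv_testChannel_ne_top hlam.le hT.le) (measurableSet_dSig_le _ _ _ _ _) h_prob_pos)
  rw [div_le_iff₀ h_prob_pos, mul_assoc]
  exact (add_le_add_left h_kl _).trans (le_mul_of_one_le_right (by positivity) h_inv_prob)

lemma neg_rate_mul_one_add_le_log_stdGaussian_real {R ε K : ℝ} (hlam : 0 < lam)
    (hsum : ∑ i, lam i = n) (hR : 0 < R) (hη : 0 < η) (hw : ∀ i, w i ^ 2 ≤ b)
    (hb : b ^ 2 ≤ n * ε) (hε : 1 ≤ n * ε) (hK : 3 / (R * log 2 * η ^ 2) ≤ K)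
    (hKε : K * ε ≤ 1 / 2) :
    -(n * R * log 2) * (1 + (2 * K + 2 / R) * ε) ≤ log ((stdGaussian n).real
      {z | 1 / n * dSig (diagonal lam) w (tauDef lam w (Trc lam R) • z) ≤ DDrcV lam w R + η}) := by
  have hn : (0 : ℝ) < n := Nat.cast_pos.mpr (dim_pos_of_pos hlam)
  have hε0 : 0 < ε := pos_of_mul_pos_right (one_pos.trans_le hε) hn.le
  have hT := Trc_pos hlam hR
  have hT_ge : 2 * R * log 2 ≤ Trc lam R := by
    simpa only [Rrc_Trc hlam hR] using two_mul_Rrc_mul_log_two_le hlam hsum hT.le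
  have hδ : 6 * b ^ 2 / (Trc lam R * n * η ^ 2) ≤ K * ε :=
    calc 6 * b ^ 2 / (Trc lam R * n * η ^ 2) ≤ 6 * (n * ε) / (2 * R * log 2 * n * η ^ 2) := by
          gcongr
      _ = 3 / (R * log 2 * η ^ 2) * ε := by field_simp; norm_num
      _ ≤ K * ε := by gcongr
  refine le_trans ?_ (neg_mul_one_add_two_mul_le_log_stdGaussian_real hlam hsum hT hw hη hδ hKε)
  rw [Rrc_Trc hlam hR]
  have h_rate : 1 + 2 * (K * ε) ≤ 2 * (n * ε) := by linarith
  calc -(n * R * log 2) * (1 + (2 * K + 2 / R) * ε)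
      = -(n * R * log 2) * (1 + 2 * (K * ε)) - log 2 * (2 * (n * ε)) := by field_simp; ring
    _ ≤ -(n * R * log 2) * (1 + 2 * (K * ε)) - log 2 * (1 + 2 * (K * ε)) := by gcongr
    _ = -((n * R * log 2 + log 2) * (1 + 2 * (K * ε))) := by ring

end SuccessProbability

lemma tendsto_natCast_rpow_nhds_zero {s : ℝ} (hs : s < 0) :
    Filter.Tendsto (fun n : ℕ => (n : ℝ) ^ s) Filter.atTop (nhds 0) := by
  simpa only [neg_neg, Function.comp_def] using
    (tendsto_rpow_neg_atTop (neg_pos.mpr hs)).comp tendsto_natCast_atTop_atTop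

lemma mul_rpow_four_mul_sub_one {x : ℝ} (hx : 0 < x) (s : ℝ) :
    x * x ^ (4 * s - 1) = (x ^ s) ^ 4 := by
  rw [rpow_sub_one hx.ne', mul_div_cancel₀ _ hx.ne', ← rpow_mul_natCast hx.le, mul_comm s,
    Nat.cast_ofNat]

/-- single-codeword success probability lower bound,
`ln p_n ≥ -n R* ln 2 (1 + c n^{4α-1})`. The sup norm `‖·‖` on `Fin n → ℝ` is `‖·‖∞`. -/
theorem stmt_7 (Rstar η α : ℝ) (hRstar : 0 < Rstar) (hη : 0 < η)
    (hα : 0 < α) (hα4 : α < 1 / 4) :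
    ∃ c : ℝ, 0 < c ∧ ∃ n₀ : ℕ, ∀ n : ℕ, n₀ ≤ n →
      ∀ (W : Fin n → ℝ) (Sig U : Matrix (Fin n) (Fin n) ℝ) (lam : Fin n → ℝ),
        U * Uᵀ = 1 → Sig = U * Matrix.diagonal lam * Uᵀ →
        (∀ i, 0 ≤ lam i) → (∑ i, lam i) = (n : ℝ) →
        ‖Uᵀ.mulVec W‖ ≤ (n : ℝ) ^ α →
        -((n : ℝ) * Rstar * Real.log 2) * (1 + c * (n : ℝ) ^ (4 * α - 1)) ≤
          Real.log
            ((stdGaussian n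
              {cw | (1 / (n : ℝ)) *
                  dSig Sig W (tauDef lam (Uᵀ.mulVec W) (Trc lam Rstar) • cw)
                ≤ DDrcV lam (Uᵀ.mulVec W) Rstar + η}).toReal) := by
  set K : ℝ := 3 / (Rstar * log 2 * η ^ 2)
  have hK : 0 < K := by positivity
  have h_small := (tendsto_natCast_rpow_nhds_zero (by linarith : 4 * α - 1 < 0)).eventually_le_const
    (div_pos one_half_pos hK)
  obtain ⟨n₀, hn₀⟩ := Filter.eventually_atTop.mp (h_small.and (Filter.eventually_ge_atTop 1))
  refine ⟨2 * K + 2 / Rstar, by positivity, n₀, fun n hn W Sig U lam hU hSig hlam hsum hW => ?_⟩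
  obtain ⟨hKε, hn_one⟩ := hn₀ n hn
  have hn_pos : (0 : ℝ) < n := Nat.cast_pos.mpr hn_one
  have hlam_pos : 0 < lam :=
    lt_of_le_of_ne hlam (by rintro rfl; exact hn_pos.ne (by simpa using hsum))
  have hw (i : Fin n) : (Uᵀ *ᵥ W) i ^ 2 ≤ ((n : ℝ) ^ α) ^ 2 :=
    sq_le_sq.mpr (((norm_le_pi_norm _ i).trans hW).trans (le_abs_self _))
  have hε := mul_rpow_four_mul_sub_one hn_pos α
  rw [hSig, stdGaussian_setOf_dSig_le _ ((mem_orthogonalGroup_iff _ _).mpr hU)]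
  refine neg_rate_mul_one_add_le_log_stdGaussian_real hlam_pos hsum hRstar hη hw ?_ ?_ le_rfl
    ((le_div_iff₀' hK).mp hKε)
  · rw [hε, ← pow_mul]
  · exact (one_le_pow₀ (one_le_rpow (Nat.one_le_cast.mpr hn_one) hα.le)).trans_eq hε.symm
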